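/- Let A be the 3-by-3 reciprocal matrix with rows (1, 1, 3/2), (1, 1, 1), (2/3, 1, 1). A positive 3-vector (w_1, w_2, w_3) is efficient for A if and only if w_3 ≤ w_2 ≤ w_1 ≤ (3/2)·w_3. -/

import Mathlib

/-- A positive vector `w` is efficient for a reciprocal matrix `A` if every positive
vector `v` with `|v i / v j - A i j| ≤ |w i / w j - A i j|` entrywise is a positive
scalar multiple of `w`. -/
def Efficient {n : ℕ} (A : Matrix (Fin n) (Fin n) ℝ) (w : Fin n → ℝ) : Prop :=
  ∀ v : Fin n → ℝ, (∀ i, 0 < v i) →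
    (∀ i j, |v i / v j - A i j| ≤ |w i / w j - A i j|) →
    ∃ c : ℝ, 0 < c ∧ v = fun i => c * w i

/-!
Draw an edge `i → j` whenever `A i j ≤ w i / w j`. If `v` approximates `A` at least as well as
`w`, then `v i / v j ≤ w i / w j` along every edge, so `v / w` does not decrease along edges.
When every proper nonempty set of indices has an outgoing edge, `v / w` is therefore constant:
otherwise the set where it is maximal could not be left. Conversely, if no edge leaves `S`,
scaling `w` up slightly on `S` improves every entry across the cut and changes no other entry.

For a 3-by-3 reciprocal matrix with `A 0 1 * A 1 2 ≤ A 0 2`, reciprocity reads a missing edge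
as a strict edge in the opposite direction. If an edge of the cycle `0 → 1 → 2 → 0` is missing,
the cuts that it crosses force the whole cycle `0 → 2 → 1 → 0`, with that edge strict, and
multiplying its inequalities gives `A 0 2 < A 0 1 * A 1 2`.
-/

lemma le_of_abs_sub_le_abs_sub {α : Type*} [AddCommGroup α] [LinearOrder α]
    [IsOrderedAddMonoid α] {a r s : α} (has : a ≤ s) (h : |r - a| ≤ |s - a|) : r ≤ s := by
  rw [abs_of_nonneg (sub_nonneg.mpr has)] at h
  exact (sub_le_sub_iff_right a).mp (le_of_abs_le h)

open Filter Topology in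
lemma exists_one_lt_forall_mul_le {κ : Type*} [Finite κ] {x y : κ → ℝ} (h : ∀ k, x k < y k) :
    ∃ t, 1 < t ∧ ∀ k, t * x k ≤ y k := by
  have near_one : ∀ᶠ t in 𝓝[>] (1 : ℝ), ∀ k, t * x k ≤ y k := by
    refine eventually_all.mpr fun k ↦ ?_
    have tendsto_mul : Tendsto (fun t ↦ t * x k) (𝓝[>] 1) (𝓝 (x k)) := by
      simpa only [one_mul] using
        ((continuous_mul_const (x k)).tendsto 1).mono_left nhdsWithin_le_nhds
    exact tendsto_mul.eventually_le_const (h k)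
  exact (eventually_mem_nhdsWithin.and near_one).exists

/-- A reciprocal matrix: a matrix with positive entries such that transposed entries are inverse
to each other. -/
structure IsReciprocal {ι : Type*} (A : Matrix ι ι ℝ) : Prop where
  pos : ∀ i j, 0 < A i j
  inv : ∀ i j, A j i = (A i j)⁻¹

namespace IsReciprocal

variable {ι : Type*} {A : Matrix ι ι ℝ} {w : ι → ℝ}

lemma mul_le_iff_le_mul (hA : IsReciprocal A) {i j : ι} {x y : ℝ} :
    A j i * x ≤ y ↔ x ≤ A i j * y := by
  rw [hA.inv i j, inv_mul_le_iff₀ (hA.pos i j)]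

lemma abs_piecewise_div_sub_le (hA : IsReciprocal A) (hw : ∀ i, 0 < w i) {S : Set ι}
    [DecidablePred (· ∈ S)] {t : ℝ} (ht : 1 ≤ t)
    (hS : ∀ i ∈ S, ∀ j ∉ S, t * w i ≤ A i j * w j) (i j : ι) :
    |S.piecewise (t • w) w i / S.piecewise (t • w) w j - A i j| ≤ |w i / w j - A i j| := by
  have t_pos : 0 < t := one_pos.trans_le ht
  have le_scaled (k : ι) : w k ≤ t * w k := le_mul_of_one_le_left (hw k).le ht
  have scaled_pos (k : ι) : 0 < t * w k := mul_pos t_pos (hw k)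
  by_cases hi : i ∈ S <;> by_cases hj : j ∈ S <;>
    simp only [hi, hj, Set.piecewise_eq_of_mem, Set.piecewise_eq_of_notMem, not_false_eq_true,
      Pi.smul_apply, smul_eq_mul, mul_div_mul_left _ _ t_pos.ne', le_refl]
  · apply Set.abs_sub_left_of_mem_uIcc
    refine Set.mem_uIcc_of_ge ?_ ?_
    · exact div_le_div_of_nonneg_right (le_scaled i) (hw j).le
    · exact (div_le_iff₀ (hw j)).mpr (hS i hi j hj)
  · apply Set.abs_sub_left_of_mem_uIcc
    refine Set.mem_uIcc_of_le ?_ ?_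
    · exact (le_div_iff₀ (scaled_pos j)).mpr (hA.mul_le_iff_le_mul.mpr (hS j hj i hi))
    · exact div_le_div_of_nonneg_left (hw i).le (hw j) (le_scaled j)

end IsReciprocal

section Cuts

variable {n : ℕ} {A : Matrix (Fin n) (Fin n) ℝ} {w : Fin n → ℝ}

lemma Efficient.exists_mul_le_of_cut (h : Efficient A w) (hA : IsReciprocal A)
    (hw : ∀ i, 0 < w i) {S : Set (Fin n)} (hS : S.Nonempty) (hSc : Sᶜ.Nonempty) :
    ∃ i ∈ S, ∃ j ∉ S, A i j * w j ≤ w i := by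
  classical
  by_contra! no_edge
  obtain ⟨t, one_lt_t, ht⟩ := exists_one_lt_forall_mul_le
    (fun p : S × ↥Sᶜ ↦ no_edge p.1 p.1.2 p.2 p.2.2)
  have piecewise_pos (i : Fin n) : 0 < S.piecewise (t • w) w i := by
    unfold Set.piecewise
    split_ifs
    exacts [mul_pos (one_pos.trans one_lt_t) (hw i), hw i]
  obtain ⟨c, -, hc⟩ := h _ piecewise_pos <| hA.abs_piecewise_div_sub_le hw one_lt_t.le
    fun i hi j hj ↦ ht (⟨i, hi⟩, ⟨j, hj⟩)
  obtain ⟨i, hi⟩ := hS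
  obtain ⟨j, hj⟩ := hSc
  have t_eq : t = c := mul_right_cancel₀ (hw i).ne' <| by
    simpa only [Set.piecewise_eq_of_mem _ _ _ hi, Pi.smul_apply, smul_eq_mul] using congrFun hc i
  have one_eq : 1 = c := mul_right_cancel₀ (hw j).ne' <| by
    simpa only [Set.piecewise_eq_of_notMem _ _ _ hj, one_mul] using congrFun hc j
  exact one_lt_t.ne (one_eq.trans t_eq.symm)

lemma Efficient.exists_ne_mul_le [Nontrivial (Fin n)] (h : Efficient A w) (hA : IsReciprocal A)
    (hw : ∀ i, 0 < w i) (i : Fin n) : ∃ j ≠ i, A i j * w j ≤ w i := by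
  simpa using h.exists_mul_le_of_cut hA hw (Set.singleton_nonempty i)
    (Set.nonempty_compl_of_nontrivial i)

lemma Efficient.exists_ne_le_mul [Nontrivial (Fin n)] (h : Efficient A w) (hA : IsReciprocal A)
    (hw : ∀ i, 0 < w i) (i : Fin n) : ∃ j ≠ i, w i ≤ A i j * w j := by
  simpa [hA.mul_le_iff_le_mul] using h.exists_mul_le_of_cut hA hw (S := {i}ᶜ)
    (Set.nonempty_compl_of_nontrivial i) (by simp)

lemma efficient_of_forall_cut (hw : ∀ i, 0 < w i)
    (h : ∀ S : Set (Fin n), S.Nonempty → Sᶜ.Nonempty → ∃ i ∈ S, ∃ j ∉ S, A i j * w j ≤ w i) :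
    Efficient A w := by
  intro v hv hvw
  rcases isEmpty_or_nonempty (Fin n) with _ | _
  · exact ⟨1, one_pos, Subsingleton.elim _ _⟩
  have ratio_le_of_edge {i j : Fin n} (hij : A i j * w j ≤ w i) : v i / w i ≤ v j / w j := by
    have quotient_le := le_of_abs_sub_le_abs_sub ((le_div_iff₀ (hw j)).mpr hij) (hvw i j)
    rw [div_le_div_iff₀ (hv j) (hw j)] at quotient_le
    rwa [div_le_div_iff₀ (hw i) (hw j), mul_comm (v j)]
  obtain ⟨m, hm⟩ := Finite.exists_max fun i ↦ v i / w i
  have ratio_eq (i : Fin n) : v i / w i = v m / w m := by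
    by_contra hi
    obtain ⟨k, hk, l, hl, hkl⟩ := h {k | v k / w k = v m / w m} ⟨m, rfl⟩ ⟨i, hi⟩
    exact hl <| (hm l).antisymm <| hk.symm.trans_le <| ratio_le_of_edge hkl
  exact ⟨v m / w m, div_pos (hv m) (hw m), funext fun i ↦ (div_eq_iff (hw i).ne').mp (ratio_eq i)⟩

open scoped Fin.NatCast in
lemma exists_mem_add_one_notMem [NeZero n] {S : Set (Fin n)} (hS : S.Nonempty)
    (hSc : Sᶜ.Nonempty) : ∃ i ∈ S, i + 1 ∉ S := by
  by_contra! add_one_mem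
  obtain ⟨i, hi⟩ := hS
  obtain ⟨j, hj⟩ := hSc
  have add_natCast_mem (k : ℕ) : i + (k : Fin n) ∈ S := by
    induction k with
    | zero => simpa only [Nat.cast_zero, add_zero] using hi
    | succ k ih => simpa only [Nat.cast_succ, add_assoc] using add_one_mem _ ih
  exact hj <| by simpa using add_natCast_mem (j - i).val

lemma efficient_of_forall_mul_add_one_le [NeZero n] (hw : ∀ i, 0 < w i)
    (h : ∀ i, A i (i + 1) * w (i + 1) ≤ w i) : Efficient A w :=
  efficient_of_forall_cut hw fun _ hS hSc ↦
    let ⟨i, hi, hi'⟩ := exists_mem_add_one_notMem hS hSc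
    ⟨i, hi, i + 1, hi', h i⟩

end Cuts

section FinThree

variable {A : Matrix (Fin 3) (Fin 3) ℝ} {w : Fin 3 → ℝ}

lemma Efficient.cycle_of_mul_le (h : Efficient A w) (hA : IsReciprocal A) (hw : ∀ i, 0 < w i)
    (hA_mul : A 0 1 * A 1 2 ≤ A 0 2) :
    A 1 2 * w 2 ≤ w 1 ∧ A 0 1 * w 1 ≤ w 0 ∧ w 0 ≤ A 0 2 * w 2 := by
  have out_zero : A 0 1 * w 1 ≤ w 0 ∨ A 0 2 * w 2 ≤ w 0 := by
    simpa [Fin.exists_fin_succ] using h.exists_ne_mul_le hA hw 0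
  have out_one : w 0 ≤ A 0 1 * w 1 ∨ A 1 2 * w 2 ≤ w 1 := by
    simpa [Fin.exists_fin_succ, hA.mul_le_iff_le_mul (i := 0)] using h.exists_ne_mul_le hA hw 1
  have out_two : w 0 ≤ A 0 2 * w 2 ∨ w 1 ≤ A 1 2 * w 2 := by
    simpa [Fin.exists_fin_succ, hA.mul_le_iff_le_mul (j := 2)] using h.exists_ne_mul_le hA hw 2
  have into_zero : w 0 ≤ A 0 1 * w 1 ∨ w 0 ≤ A 0 2 * w 2 := by
    simpa [Fin.exists_fin_succ] using h.exists_ne_le_mul hA hw 0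
  have into_one : A 0 1 * w 1 ≤ w 0 ∨ w 1 ≤ A 1 2 * w 2 := by
    simpa [Fin.exists_fin_succ, ← hA.mul_le_iff_le_mul (j := 0)] using h.exists_ne_le_mul hA hw 1
  have into_two : A 0 2 * w 2 ≤ w 0 ∨ A 1 2 * w 2 ≤ w 1 := by
    simpa [Fin.exists_fin_succ, ← hA.mul_le_iff_le_mul (i := 2)] using h.exists_ne_le_mul hA hw 2
  have mul_le : A 0 1 * (A 1 2 * w 2) ≤ A 0 2 * w 2 := by
    rw [← mul_assoc]
    exact mul_le_mul_of_nonneg_right hA_mul (hw 2).le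
  have pos01 := hA.pos 0 1
  refine ⟨?_, ?_, ?_⟩ <;> by_contra! hlt <;> apply lt_irrefl (w 0)
  · calc
      w 0 ≤ A 0 1 * w 1 := out_one.resolve_right hlt.not_ge
      _ < A 0 1 * (A 1 2 * w 2) := by gcongr
      _ ≤ A 0 2 * w 2 := mul_le
      _ ≤ w 0 := into_two.resolve_right hlt.not_ge
  · have h12 : w 1 ≤ A 1 2 * w 2 := into_one.resolve_left hlt.not_ge
    calc
      w 0 < A 0 1 * w 1 := hlt
      _ ≤ A 0 1 * (A 1 2 * w 2) := by gcongr
      _ ≤ A 0 2 * w 2 := mul_le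
      _ ≤ w 0 := out_zero.resolve_left hlt.not_ge
  · have h12 : w 1 ≤ A 1 2 * w 2 := out_two.resolve_left hlt.not_ge
    calc
      w 0 ≤ A 0 1 * w 1 := into_zero.resolve_right hlt.not_ge
      _ ≤ A 0 1 * (A 1 2 * w 2) := by gcongr
      _ ≤ A 0 2 * w 2 := mul_le
      _ < w 0 := hlt

theorem stmt_12_general (hA : IsReciprocal A) (hA_mul : A 0 1 * A 1 2 ≤ A 0 2)
    (hw : ∀ i, 0 < w i) :
    Efficient A w ↔ A 1 2 * w 2 ≤ w 1 ∧ A 0 1 * w 1 ≤ w 0 ∧ w 0 ≤ A 0 2 * w 2 := by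
  refine ⟨fun h ↦ h.cycle_of_mul_le hA hw hA_mul, fun ⟨h12, h01, h02⟩ ↦ ?_⟩
  refine efficient_of_forall_mul_add_one_le hw fun i ↦ ?_
  fin_cases i
  exacts [h01, h12, hA.mul_le_iff_le_mul.mpr h02]

end FinThree

lemma isReciprocal_three_halves :
    IsReciprocal (Matrix.of ![![1, 1, 3 / 2], ![1, 1, 1], ![2 / 3, 1, 1]]) where
  pos i j := by fin_cases i <;> fin_cases j <;> norm_num
  inv i j := by fin_cases i <;> fin_cases j <;> norm_num

/-- The efficient vectors for the 3-by-3 reciprocal matrix with rows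
`(1, 1, 3/2)`, `(1, 1, 1)`, `(2/3, 1, 1)` are exactly the positive vectors with
`w 2 ≤ w 1 ≤ w 0 ≤ (3/2) * w 2`. -/
theorem stmt_12 (A : Matrix (Fin 3) (Fin 3) ℝ)
    (hA : A = Matrix.of ![![1, 1, 3 / 2], ![1, 1, 1], ![2 / 3, 1, 1]])
    (w : Fin 3 → ℝ) (hw : ∀ i, 0 < w i) :
    Efficient A w ↔ (w 2 ≤ w 1 ∧ w 1 ≤ w 0 ∧ w 0 ≤ (3 / 2) * w 2) := by
  subst hA
  simpa using stmt_12_general isReciprocal_three_halves (by change (1 : ℝ) * 1 ≤ 3 / 2; norm_num) hw
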